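/- arXiv:2510.11158 — 3 statements merged into one kernel-verified Lean document; each statement's English description precedes it below -/
import Mathlib

section
/- Assume in addition that K₊, K₋ > 0 are constants, a₊, a₋ : ℝ^d → ℝ are continuous with a₊(y) < α < a₋(y) for every y ∈ ℝ^d, that −K₊ ≤ U(x,y) ≤ K₋ for all (x,y), that U(x,y) = −K₊ whenever x ≤ a₊(y) and U(x,y) = K₋ whenever x ≥ a₋(y), that (L̂ U)(x,y) + b_x(x,y)U(x,y) + c_x(x,y) = 0 whenever a₊(y) < x < a₋(y), that c_x(x,y) + K₋·b_x(x,y) ≥ 0 whenever x ≥ a₋(y), and that c_x(x,y) − K₊·b_x(x,y) ≤ 0 whenever x ≤ a₊(y). Then for every (x,y) ∈ ℝ × ℝ^d: −K₊ ≤ V_x(x,y) ≤ K₋, (L V)(x,y) + c(x,y) − λ(y) ≥ 0, and min{ (L V)(x,y) + c(x,y) − λ(y), K₋ − V_x(x,y), V_x(x,y) + K₊ } = 0. -/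
open MeasureTheory

/-- Partial derivative in the first (scalar) variable. -/
noncomputable def pdx {d : ℕ} (f : ℝ × (Fin d → ℝ) → ℝ) (p : ℝ × (Fin d → ℝ)) : ℝ :=
  deriv (fun x => f (x, p.2)) p.1

/-- Partial derivative in the `i`-th coordinate of the second variable. -/
noncomputable def pdy {d : ℕ} (i : Fin d) (f : ℝ × (Fin d → ℝ) → ℝ) (p : ℝ × (Fin d → ℝ)) : ℝ :=
  deriv (fun t => f (p.1, Function.update p.2 i t)) (p.2 i)

/-- `(ρζ)_i(y) = ∑_j ρ_j ζ_{ij}(y)`. -/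
noncomputable def rzeta {d : ℕ} (ζ : (Fin d → ℝ) → Fin d → Fin d → ℝ) (ρ : Fin d → ℝ)
    (y : Fin d → ℝ) (i : Fin d) : ℝ := ∑ j, ρ j * ζ y i j

/-- `a(y) = ζ(y) ζ(y)ᵀ`. -/
noncomputable def amat {d : ℕ} (ζ : (Fin d → ℝ) → Fin d → Fin d → ℝ)
    (y : Fin d → ℝ) (i j : Fin d) : ℝ := ∑ k, ζ y i k * ζ y j k

/-- The generator `L̂` of the auxiliary process `(X̂, Ŷ)`, applied to `U`. -/
noncomputable def genHat {d : ℕ} (b σ' : ℝ × (Fin d → ℝ) → ℝ)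
    (η : (Fin d → ℝ) → Fin d → ℝ) (ζ : (Fin d → ℝ) → Fin d → Fin d → ℝ) (ρ : Fin d → ℝ)
    (U : ℝ × (Fin d → ℝ) → ℝ) (p : ℝ × (Fin d → ℝ)) : ℝ :=
  (b p + σ' p * pdx σ' p) * pdx U p
    + (1 / 2) * (σ' p) ^ 2 * pdx (pdx U) p
    + ∑ i, (η p.2 i + pdx σ' p * rzeta ζ ρ p.2 i) * pdy i U p
    + (1 / 2) * ∑ i, ∑ j, amat ζ p.2 i j * pdy i (pdy j U) p
    + σ' p * ∑ i, rzeta ζ ρ p.2 i * pdy i (pdx U) p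

/-- The generator `L` of the uncontrolled process `(X⁰, Y)`, applied to `V`. -/
noncomputable def gen {d : ℕ} (b σ' : ℝ × (Fin d → ℝ) → ℝ)
    (η : (Fin d → ℝ) → Fin d → ℝ) (ζ : (Fin d → ℝ) → Fin d → Fin d → ℝ) (ρ : Fin d → ℝ)
    (V : ℝ × (Fin d → ℝ) → ℝ) (p : ℝ × (Fin d → ℝ)) : ℝ :=
  b p * pdx V p
    + (1 / 2) * (σ' p) ^ 2 * pdx (pdx V) p
    + ∑ i, η p.2 i * pdy i V p
    + (1 / 2) * ∑ i, ∑ j, amat ζ p.2 i j * pdy i (pdy j V) p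
    + σ' p * ∑ i, rzeta ζ ρ p.2 i * pdy i (pdx V) p

/-!
Differentiating under the integral sign gives `V_x = U` and the intertwining relation
`∂ₓ(L V) = L̂ U + b_x U`, which is where the extra terms `σ σ_x U_x` and `σ_x (ρζ) · ∇_y U` of `L̂`
come from. Moreover `λ(y) = (L V + c)(α, y)`, because the first and second derivatives of `V` in
the `y` variables alone vanish at `x = α`. Hence, for fixed `y`, the function
`x ↦ (L V + c)(x, y) - λ(y)` vanishes at `α` and has derivative `L̂ U + b_x U + c_x`, which is zero
between the free boundaries; beyond them `U` is locally constant, so `L̂ U = 0` and the derivative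
is `c_x + U b_x`, whose sign is prescribed. The function is therefore zero between the boundaries
and nonnegative outside, where one of the two gradient constraints is active.
-/

open Filter Topology Set

section RealAnalysis

theorem hasDerivAt_intervalIntegral_of_continuous_deriv {𝕜 E : Type*} [RCLike 𝕜]
    [NormedAddCommGroup E] [NormedSpace ℝ E] [NormedSpace 𝕜 E] {F F' : 𝕜 → ℝ → E}
    (hF : ∀ t, Continuous (F t)) (hF' : Continuous (Function.uncurry F'))
    (hFF' : ∀ t z, HasDerivAt (fun s => F s z) (F' t z) t) (a b : ℝ) (t₀ : 𝕜) :
    HasDerivAt (fun t => ∫ z in a..b, F t z) (∫ z in a..b, F' t₀ z) t₀ := by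
  obtain ⟨C, hC⟩ := ((isCompact_closedBall t₀ 1).prod
    (isCompact_uIcc (a := a) (b := b))).exists_bound_of_continuousOn hF'.continuousOn
  exact (intervalIntegral.hasDerivAt_integral_of_dominated_loc_of_deriv_le
    (Metric.ball_mem_nhds t₀ one_pos)
    (Eventually.of_forall fun t => (hF t).aestronglyMeasurable)
    ((hF t₀).intervalIntegrable a b)
    (hF'.uncurry_left t₀).aestronglyMeasurable
    (Eventually.of_forall fun z hz t ht =>
      hC (t, z) ⟨Metric.ball_subset_closedBall ht, uIoc_subset_uIcc hz⟩)
    intervalIntegrable_const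
    (Eventually.of_forall fun z _ t _ => hFF' t z)).2

theorem eq_of_hasDerivAt_eq_zero_interior {D : Set ℝ} (hD : Convex ℝ D) {g : ℝ → ℝ}
    (hg : ContinuousOn g D) (hg' : ∀ t ∈ interior D, HasDerivAt g 0 t) {s t : ℝ}
    (hs : s ∈ D) (ht : t ∈ D) : g s = g t := by
  have hmono : MonotoneOn g D := monotoneOn_of_hasDerivWithinAt_nonneg hD hg
    (fun r hr => (hg' r hr).hasDerivWithinAt) fun _ _ => le_rfl
  have hanti : AntitoneOn g D := antitoneOn_of_hasDerivWithinAt_nonpos hD hg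
    (fun r hr => (hg' r hr).hasDerivWithinAt) fun _ _ => le_rfl
  rcases le_total s t with hst | hts
  · exact (hmono hs ht hst).antisymm (hanti hs ht hst)
  · exact (hanti ht hs hts).antisymm (hmono ht hs hts)

theorem isMinOn_univ_of_deriv_nonpos_zero_nonneg {g g' : ℝ → ℝ} {l u s : ℝ}
    (hg : ∀ t, HasDerivAt g (g' t) t) (hleft : ∀ t < l, g' t ≤ 0)
    (hmid : ∀ t ∈ Ioo l u, g' t = 0) (hright : ∀ t > u, 0 ≤ g' t) (hs : s ∈ Icc l u) :
    IsMinOn g univ s := by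
  have hcont : Continuous g := continuous_iff_continuousAt.2 fun t => (hg t).continuousAt
  have hconst : ∀ t ∈ Icc l u, g s = g t := fun t ht =>
    eq_of_hasDerivAt_eq_zero_interior (convex_Icc l u) hcont.continuousOn
      (fun r hr => hmid r (interior_Icc.subset hr) ▸ hg r) hs ht
  have hlu : l ≤ u := hs.1.trans hs.2
  refine isMinOn_univ_iff.2 fun t => ?_
  rcases lt_or_ge t l with htl | hlt
  · have hanti : AntitoneOn g (Iic l) := antitoneOn_of_hasDerivWithinAt_nonpos (convex_Iic l)
      hcont.continuousOn (fun r _ => (hg r).hasDerivWithinAt)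
      fun r hr => hleft r (interior_Iic.subset hr)
    exact (hconst l ⟨le_rfl, hlu⟩).trans_le (hanti htl.le self_mem_Iic htl.le)
  rcases le_or_gt t u with htu | hut
  · exact (hconst t ⟨hlt, htu⟩).le
  · have hmono : MonotoneOn g (Ici u) := monotoneOn_of_hasDerivWithinAt_nonneg (convex_Ici u)
      hcont.continuousOn (fun r _ => (hg r).hasDerivWithinAt)
      fun r hr => hright r (interior_Ici.subset hr)
    exact (hconst u ⟨hlu, le_rfl⟩).trans_le (hmono self_mem_Ici hut.le hut.le)

theorem min_min_eq_zero {M : Type*} [LinearOrder M] [Zero M] {r s t : M}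
    (hr : 0 ≤ r) (hs : 0 ≤ s) (ht : 0 ≤ t) (h : r = 0 ∨ s = 0 ∨ t = 0) :
    min (min r s) t = 0 := by
  rcases h with rfl | rfl | rfl
  · rw [min_eq_left hs, min_eq_left ht]
  · rw [min_eq_right hr, min_eq_left ht]
  · exact min_eq_right (le_min hr hs)

end RealAnalysis

section FreeBoundary

variable {Y β : Type*} [TopologicalSpace Y] {a : Y → ℝ} {f : ℝ × Y → β} {k : β} {x : ℝ} {y : Y}

theorem eventuallyEq_const_of_upperSemicontinuous_of_lt (ha : UpperSemicontinuous a)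
    (hfg : ∀ x y, a y ≤ x → f (x, y) = k) (hx : a y < x) : f =ᶠ[𝓝 (x, y)] fun _ => k := by
  have hopen := ha.IsClosed_hypograph.isOpen_compl.preimage (continuous_swap (X := ℝ) (Y := Y))
  filter_upwards [hopen.mem_nhds (not_le.2 hx)] with p hp
  exact hfg p.1 p.2 (le_of_not_ge hp)

theorem eventuallyEq_const_of_lowerSemicontinuous_of_lt (ha : LowerSemicontinuous a)
    (hfg : ∀ x y, x ≤ a y → f (x, y) = k) (hx : x < a y) : f =ᶠ[𝓝 (x, y)] fun _ => k := by
  have hopen := ha.isClosed_epigraph.isOpen_compl.preimage (continuous_swap (X := ℝ) (Y := Y))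
  filter_upwards [hopen.mem_nhds (not_le.2 hx)] with p hp
  exact hfg p.1 p.2 (le_of_not_ge hp)

end FreeBoundary

section PartialDerivatives

variable {d : ℕ} {f g : ℝ × (Fin d → ℝ) → ℝ} {p : ℝ × (Fin d → ℝ)}

theorem hasDerivAt_pdy (hf : Differentiable ℝ f) (i : Fin d) (x : ℝ) (y : Fin d → ℝ) (t : ℝ) :
    HasDerivAt (fun s => f (x, Function.update y i s)) (pdy i f (x, Function.update y i t)) t := by
  have hdiff : Differentiable ℝ fun s => f (x, Function.update y i s) :=
    hf.comp ((differentiable_const x).prodMk fun s => (hasDerivAt_update y i s).differentiableAt)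
  simpa [pdy] using (hdiff t).hasDerivAt

theorem pdx_eq_fderiv (hf : Differentiable ℝ f) : pdx f = fun p => fderiv ℝ f p (1, 0) :=
  funext fun p => ((hf p).hasFDerivAt.comp_hasDerivAt p.1
    ((hasDerivAt_id p.1).prodMk (hasDerivAt_const p.1 p.2))).deriv

theorem pdy_eq_fderiv (hf : Differentiable ℝ f) (i : Fin d) :
    pdy i f = fun p => fderiv ℝ f p (0, Pi.single i 1) := by
  funext p
  have hcurve : HasDerivAt (fun t => (p.1, Function.update p.2 i t))
      ((0 : ℝ), Pi.single i (1 : ℝ)) (p.2 i) :=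
    (hasDerivAt_const (p.2 i) p.1).prodMk (hasDerivAt_update p.2 i (p.2 i))
  exact ((hf p).hasFDerivAt.comp_hasDerivAt_of_eq (p.2 i) hcurve (by simp)).deriv

theorem contDiff_pdx {m n : WithTop ℕ∞} (hf : ContDiff ℝ n f) (hmn : m + 1 ≤ n) :
    ContDiff ℝ m (pdx f) := by
  rw [pdx_eq_fderiv (hf.differentiable (by rintro rfl; simp at hmn))]
  exact (hf.fderiv_right hmn).clm_apply contDiff_const

theorem contDiff_pdy {m n : WithTop ℕ∞} (hf : ContDiff ℝ n f) (hmn : m + 1 ≤ n) (i : Fin d) :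
    ContDiff ℝ m (pdy i f) := by
  rw [pdy_eq_fderiv (hf.differentiable (by rintro rfl; simp at hmn)) i]
  exact (hf.fderiv_right hmn).clm_apply contDiff_const

theorem pdx_pdy_comm (hf : ContDiff ℝ 2 f) (i : Fin d) : pdx (pdy i f) = pdy i (pdx f) := by
  have hf₁ : Differentiable ℝ f := hf.differentiable two_ne_zero
  have hf₂ : Differentiable ℝ (fderiv ℝ f) :=
    (hf.fderiv_right (m := 1) one_add_one_eq_two.le).differentiable one_ne_zero
  have second_fderiv (p v w : ℝ × (Fin d → ℝ)) :
      fderiv ℝ (fun q => fderiv ℝ f q v) p w = fderiv ℝ (fderiv ℝ f) p w v := by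
    simp [fderiv_clm_apply (hf₂ p) (differentiableAt_const v)]
  funext p
  have hsymm : IsSymmSndFDerivAt ℝ f p := hf.contDiffAt.isSymmSndFDerivAt (by simp)
  rw [pdx_eq_fderiv ((contDiff_pdy hf one_add_one_eq_two.le i).differentiable one_ne_zero),
    pdy_eq_fderiv ((contDiff_pdx hf one_add_one_eq_two.le).differentiable one_ne_zero),
    pdx_eq_fderiv hf₁, pdy_eq_fderiv hf₁]
  simp only [second_fderiv]
  exact hsymm _ _

theorem pdx_const (k : ℝ) : pdx (fun _ : ℝ × (Fin d → ℝ) => k) = fun _ => 0 :=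
  funext fun p => deriv_const p.1 k

theorem pdy_const (i : Fin d) (k : ℝ) : pdy i (fun _ : ℝ × (Fin d → ℝ) => k) = fun _ => 0 :=
  funext fun p => deriv_const (p.2 i) k

theorem pdx_congr_of_eventuallyEq (h : f =ᶠ[𝓝 p] g) : pdx f =ᶠ[𝓝 p] pdx g := by
  filter_upwards [h.eventuallyEq_nhds] with q hq
  have hline : Tendsto (fun x => (x, q.2)) (𝓝 q.1) (𝓝 q) :=
    Continuous.tendsto' (by fun_prop) _ _ rfl
  exact (hq.comp_tendsto hline).deriv_eq

theorem pdy_congr_of_eventuallyEq (h : f =ᶠ[𝓝 p] g) (i : Fin d) :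
    pdy i f =ᶠ[𝓝 p] pdy i g := by
  filter_upwards [h.eventuallyEq_nhds] with q hq
  have hline : Tendsto (fun t => (q.1, Function.update q.2 i t)) (𝓝 (q.2 i)) (𝓝 q) :=
    Continuous.tendsto' (by fun_prop) _ _ (by simp)
  exact (hq.comp_tendsto hline).deriv_eq

end PartialDerivatives

/-- The primitive `(x, y) ↦ ∫_α^x f(z, y) dz` in the first variable that vanishes at `x = α`. It
turns the value function `U` of the game into the potential `V` of the control problem. -/
noncomputable def xPrimitive {d : ℕ} (α : ℝ) (f : ℝ × (Fin d → ℝ) → ℝ)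
    (p : ℝ × (Fin d → ℝ)) : ℝ := ∫ z in α..p.1, f (z, p.2)

section XPrimitive

variable {d : ℕ} {f : ℝ × (Fin d → ℝ) → ℝ}

theorem xPrimitive_self (α : ℝ) (f : ℝ × (Fin d → ℝ) → ℝ) (y : Fin d → ℝ) :
    xPrimitive α f (α, y) = 0 := intervalIntegral.integral_same

theorem hasDerivAt_xPrimitive {y : Fin d → ℝ} (hf : Continuous fun z => f (z, y)) (α x : ℝ) :
    HasDerivAt (fun t => xPrimitive α f (t, y)) (f (x, y)) x :=
  (hf.integral_hasStrictDerivAt α x).hasDerivAt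

theorem pdx_xPrimitive (hf : ∀ y, Continuous fun z => f (z, y)) (α : ℝ) :
    pdx (xPrimitive α f) = f :=
  funext fun p => (hasDerivAt_xPrimitive (hf p.2) α p.1).deriv

theorem pdy_xPrimitive (hf : ContDiff ℝ 1 f) (α : ℝ) (i : Fin d) :
    pdy i (xPrimitive α f) = xPrimitive α (pdy i f) := by
  funext p
  have hf_cont : Continuous f := hf.continuous
  have hpdy_cont : Continuous (pdy i f) := (contDiff_pdy hf (zero_add 1).le i).continuous
  have hderiv := hasDerivAt_intervalIntegral_of_continuous_deriv
    (F := fun t z => f (z, Function.update p.2 i t))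
    (F' := fun t z => pdy i f (z, Function.update p.2 i t))
    (fun t => by fun_prop) (by fun_prop)
    (fun t z => hasDerivAt_pdy (hf.differentiable one_ne_zero) i z p.2 t) α p.1 (p.2 i)
  simp only [Function.update_eq_self] at hderiv
  exact hderiv.deriv

end XPrimitive

section Generators

variable {d : ℕ} {b σ : ℝ × (Fin d → ℝ) → ℝ} {η : (Fin d → ℝ) → Fin d → ℝ}
  {ζ : (Fin d → ℝ) → Fin d → Fin d → ℝ} {ρ : Fin d → ℝ} {U : ℝ × (Fin d → ℝ) → ℝ}

theorem genHat_eq_zero_of_eventuallyEq_const {k : ℝ} {p : ℝ × (Fin d → ℝ)}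
    (h : U =ᶠ[𝓝 p] fun _ => k) : genHat b σ η ζ ρ U p = 0 := by
  have pdx_zero {f : ℝ × (Fin d → ℝ) → ℝ} {k : ℝ} (hf : f =ᶠ[𝓝 p] fun _ => k) :
      pdx f =ᶠ[𝓝 p] fun _ => 0 := by
    simpa only [pdx_const] using pdx_congr_of_eventuallyEq hf
  have pdy_zero {f : ℝ × (Fin d → ℝ) → ℝ} {k : ℝ} (hf : f =ᶠ[𝓝 p] fun _ => k) (i : Fin d) :
      pdy i f =ᶠ[𝓝 p] fun _ => 0 := by
    simpa only [pdy_const] using pdy_congr_of_eventuallyEq hf i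
  simp [genHat, (pdx_zero h).eq_of_nhds, (pdx_zero (pdx_zero h)).eq_of_nhds,
    fun i => (pdy_zero h i).eq_of_nhds, fun i j => (pdy_zero (pdy_zero h j) i).eq_of_nhds,
    fun i => (pdy_zero (pdx_zero h) i).eq_of_nhds]

theorem gen_xPrimitive (hU : ContDiff ℝ 2 U) (α : ℝ) (p : ℝ × (Fin d → ℝ)) :
    gen b σ η ζ ρ (xPrimitive α U) p =
      b p * U p + (1 / 2) * (σ p) ^ 2 * pdx U p
        + ∑ i, η p.2 i * xPrimitive α (pdy i U) p
        + (1 / 2) * ∑ i, ∑ j, amat ζ p.2 i j * xPrimitive α (pdy i (pdy j U)) p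
        + σ p * ∑ i, rzeta ζ ρ p.2 i * pdy i U p := by
  have hU_cont : Continuous U := hU.continuous
  have hVx : pdx (xPrimitive α U) = U := pdx_xPrimitive (fun y => by fun_prop) α
  have hVy (i : Fin d) : pdy i (xPrimitive α U) = xPrimitive α (pdy i U) :=
    pdy_xPrimitive (hU.of_le one_le_two) α i
  have hVyy (i j : Fin d) :
      pdy i (xPrimitive α (pdy j U)) = xPrimitive α (pdy i (pdy j U)) :=
    pdy_xPrimitive (contDiff_pdy hU one_add_one_eq_two.le j) α i
  simp only [gen, hVx, hVy, hVyy]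

theorem gen_xPrimitive_self (hU : ContDiff ℝ 2 U) (α : ℝ) (y : Fin d → ℝ) :
    gen b σ η ζ ρ (xPrimitive α U) (α, y) =
      U (α, y) * b (α, y) + (1 / 2) * (σ (α, y)) ^ 2 * pdx U (α, y)
        + σ (α, y) * ∑ i, rzeta ζ ρ y i * pdy i U (α, y) := by
  simp only [gen_xPrimitive hU, xPrimitive_self, mul_zero, Finset.sum_const_zero, add_zero,
    mul_comm (b (α, y))]

theorem hasDerivAt_gen_xPrimitive {x : ℝ} {y : Fin d → ℝ}
    (hb : DifferentiableAt ℝ (fun t => b (t, y)) x)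
    (hσ : DifferentiableAt ℝ (fun t => σ (t, y)) x) (hU : ContDiff ℝ 2 U) (α : ℝ) :
    HasDerivAt (fun t => gen b σ η ζ ρ (xPrimitive α U) (t, y))
      (genHat b σ η ζ ρ U (x, y) + pdx b (x, y) * U (x, y)) x := by
  have slice {f : ℝ × (Fin d → ℝ) → ℝ} (hf : ContDiff ℝ 1 f) :
      HasDerivAt (fun t => f (t, y)) (pdx f (x, y)) x :=
    (((hf.differentiable one_ne_zero).comp (by fun_prop :
      Differentiable ℝ fun t : ℝ => (t, y))) x).hasDerivAt
  have hbx : HasDerivAt (fun t => b (t, y)) (pdx b (x, y)) x := hb.hasDerivAt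
  have hσx : HasDerivAt (fun t => σ (t, y)) (pdx σ (x, y)) x := hσ.hasDerivAt
  have hUy (i : Fin d) : ContDiff ℝ 1 (pdy i U) := contDiff_pdy hU one_add_one_eq_two.le i
  have hUyy (i j : Fin d) : Continuous (pdy i (pdy j U)) :=
    (contDiff_pdy (hUy j) (zero_add 1).le i).continuous
  have hdrift := hbx.mul (slice (hU.of_le one_le_two))
  have hdiffusion := ((hσx.pow 2).const_mul (1 / 2)).mul
    (slice (contDiff_pdx hU one_add_one_eq_two.le))
  have hdrift_y := HasDerivAt.fun_sum (u := Finset.univ) fun i _ =>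
    (hasDerivAt_xPrimitive ((hUy i).continuous.comp (.prodMk_left y)) α x).const_mul (η y i)
  have hdiffusion_y := HasDerivAt.fun_sum (u := Finset.univ) fun i _ =>
    HasDerivAt.fun_sum (u := Finset.univ) fun j _ =>
      (hasDerivAt_xPrimitive ((hUyy i j).comp (.prodMk_left y)) α x).const_mul (amat ζ y i j)
  have hcross := hσx.mul (HasDerivAt.fun_sum (u := Finset.univ) fun i _ =>
    (slice (hUy i)).const_mul (rzeta ζ ρ y i))
  simp only [gen_xPrimitive hU]
  refine ((((hdrift.add hdiffusion).add hdrift_y).add (hdiffusion_y.const_mul (1 / 2))).add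
    hcross).congr_deriv ?_
  simp only [genHat, pdx_pdy_comm hU, add_mul, Finset.sum_add_distrib, mul_assoc,
    ← Finset.mul_sum, Pi.pow_apply]
  push_cast
  ring

theorem isMinOn_gen_xPrimitive_add {c : ℝ × (Fin d → ℝ) → ℝ} {kp km : ℝ}
    {ap am : (Fin d → ℝ) → ℝ} {s : ℝ} {y : Fin d → ℝ}
    (hb : Differentiable ℝ fun t => b (t, y)) (hσ : Differentiable ℝ fun t => σ (t, y))
    (hc : Differentiable ℝ fun t => c (t, y)) (hU : ContDiff ℝ 2 U)
    (hap : LowerSemicontinuous ap) (ham : UpperSemicontinuous am)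
    (hUplus : ∀ x y, x ≤ ap y → U (x, y) = kp) (hUminus : ∀ x y, am y ≤ x → U (x, y) = km)
    (hPDE : ∀ t ∈ Ioo (ap y) (am y),
      genHat b σ η ζ ρ U (t, y) + pdx b (t, y) * U (t, y) + pdx c (t, y) = 0)
    (hSplus : ∀ t < ap y, pdx c (t, y) + kp * pdx b (t, y) ≤ 0)
    (hSminus : ∀ t > am y, 0 ≤ pdx c (t, y) + km * pdx b (t, y))
    (hs : s ∈ Icc (ap y) (am y)) (α : ℝ) :
    IsMinOn (fun t => gen b σ η ζ ρ (xPrimitive α U) (t, y) + c (t, y)) univ s := by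
  have hderiv (t : ℝ) := (hasDerivAt_gen_xPrimitive (η := η) (ζ := ζ) (ρ := ρ) (hb t) (hσ t)
    hU α).add (hc t).hasDerivAt
  refine isMinOn_univ_of_deriv_nonpos_zero_nonneg hderiv (fun t ht => ?_) hPDE (fun t ht => ?_) hs
  · have hconst := eventuallyEq_const_of_lowerSemicontinuous_of_lt hap hUplus ht
    rw [genHat_eq_zero_of_eventuallyEq_const hconst, hUplus t y ht.le, zero_add, add_comm,
      mul_comm]
    exact hSplus t ht
  · have hconst := eventuallyEq_const_of_upperSemicontinuous_of_lt ham hUminus ht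
    rw [genHat_eq_zero_of_eventuallyEq_const hconst, hUminus t y ht.le, zero_add, add_comm,
      mul_comm]
    exact hSminus t ht

end Generators

theorem statement1_general {d : ℕ} (α : ℝ)
    (b σ c : ℝ × (Fin d → ℝ) → ℝ)
    (hb : ∀ y : Fin d → ℝ, Differentiable ℝ fun x => b (x, y))
    (hσ : ∀ y : Fin d → ℝ, Differentiable ℝ fun x => σ (x, y))
    (hc : ∀ y : Fin d → ℝ, Differentiable ℝ fun x => c (x, y))
    (η : (Fin d → ℝ) → Fin d → ℝ) (ζ : (Fin d → ℝ) → Fin d → Fin d → ℝ) (ρ : Fin d → ℝ)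
    (U : ℝ × (Fin d → ℝ) → ℝ) (hU : ContDiff ℝ 2 U)
    (V : ℝ × (Fin d → ℝ) → ℝ)
    (hV : ∀ (x : ℝ) (y : Fin d → ℝ), V (x, y) = ∫ z in α..x, U (z, y))
    (lam : (Fin d → ℝ) → ℝ)
    (hlam : ∀ y : Fin d → ℝ, lam y = c (α, y) + U (α, y) * b (α, y)
        + (1 / 2) * (σ (α, y)) ^ 2 * pdx U (α, y)
        + σ (α, y) * ∑ i, rzeta ζ ρ y i * pdy i U (α, y))
    (Kp Km : ℝ)
    (ap am : (Fin d → ℝ) → ℝ) (hap : LowerSemicontinuous ap) (ham : UpperSemicontinuous am)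
    (horder : ∀ y : Fin d → ℝ, α ∈ Icc (ap y) (am y))
    (hUbdd : ∀ (x : ℝ) (y : Fin d → ℝ), -Kp ≤ U (x, y) ∧ U (x, y) ≤ Km)
    (hUplus : ∀ (x : ℝ) (y : Fin d → ℝ), x ≤ ap y → U (x, y) = -Kp)
    (hUminus : ∀ (x : ℝ) (y : Fin d → ℝ), am y ≤ x → U (x, y) = Km)
    (hPDE : ∀ (x : ℝ) (y : Fin d → ℝ), ap y < x → x < am y →
      genHat b σ η ζ ρ U (x, y) + pdx b (x, y) * U (x, y) + pdx c (x, y) = 0)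
    (hSminus : ∀ (x : ℝ) (y : Fin d → ℝ), am y ≤ x →
      0 ≤ pdx c (x, y) + Km * pdx b (x, y))
    (hSplus : ∀ (x : ℝ) (y : Fin d → ℝ), x ≤ ap y →
      pdx c (x, y) - Kp * pdx b (x, y) ≤ 0) :
    ∀ (x : ℝ) (y : Fin d → ℝ),
      (-Kp ≤ pdx V (x, y) ∧ pdx V (x, y) ≤ Km)
      ∧ 0 ≤ gen b σ η ζ ρ V (x, y) + c (x, y) - lam y
      ∧ min (min (gen b σ η ζ ρ V (x, y) + c (x, y) - lam y)
          (Km - pdx V (x, y))) (pdx V (x, y) + Kp) = 0 := by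
  intro x y
  obtain rfl : V = xPrimitive α U := funext fun p => hV p.1 p.2
  have hU_cont : Continuous U := hU.continuous
  rw [pdx_xPrimitive (fun y => by fun_prop) α]
  set g : ℝ → ℝ := fun t => gen b σ η ζ ρ (xPrimitive α U) (t, y) + c (t, y) with hg_def
  have hlam_eq : lam y = g α := by
    simp only [hg_def, hlam, gen_xPrimitive_self hU]
    ring
  have hmin {s : ℝ} (hs : s ∈ Icc (ap y) (am y)) (t : ℝ) : g s ≤ g t :=
    isMinOn_univ_iff.1 (isMinOn_gen_xPrimitive_add (hb y) (hσ y) (hc y) hU hap ham hUplus hUminus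
      (fun t ht => hPDE t y ht.1 ht.2) (fun t ht => by linarith [hSplus t y ht.le])
      (fun t ht => hSminus t y ht.le) hs α) t
  obtain ⟨hUl, hUu⟩ := hUbdd x y
  have hnonneg : 0 ≤ g x - lam y := sub_nonneg.2 (hlam_eq ▸ hmin (horder y) x)
  refine ⟨⟨hUl, hUu⟩, hnonneg,
    min_min_eq_zero hnonneg (by linarith) (by linarith) ?_⟩
  rcases le_total x (ap y) with hx | hx
  · exact .inr (.inr (by rw [hUplus x y hx, neg_add_cancel]))
  rcases le_total (am y) x with hx' | hx'
  · exact .inr (.inl (by rw [hUminus x y hx', sub_self]))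
  · exact .inl ((sub_nonpos.2 (hlam_eq ▸ hmin ⟨hx, hx'⟩ α)).antisymm hnonneg)

theorem statement1 {d : ℕ} (hd : 1 ≤ d) (α : ℝ)
    (b σ c : ℝ × (Fin d → ℝ) → ℝ)
    (hb : ContDiff ℝ 1 b) (hσ : ContDiff ℝ 1 σ) (hc : ContDiff ℝ 1 c)
    (η : (Fin d → ℝ) → Fin d → ℝ) (ζ : (Fin d → ℝ) → Fin d → Fin d → ℝ) (ρ : Fin d → ℝ)
    (U : ℝ × (Fin d → ℝ) → ℝ) (hU : ContDiff ℝ 2 U)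
    (V : ℝ × (Fin d → ℝ) → ℝ)
    (hV : ∀ (x : ℝ) (y : Fin d → ℝ), V (x, y) = ∫ z in α..x, U (z, y))
    (lam : (Fin d → ℝ) → ℝ)
    (hlam : ∀ y : Fin d → ℝ, lam y = c (α, y) + U (α, y) * b (α, y)
        + (1 / 2) * (σ (α, y)) ^ 2 * pdx U (α, y)
        + σ (α, y) * ∑ i, rzeta ζ ρ y i * pdy i U (α, y))
    (Kp Km : ℝ) (hKp : 0 < Kp) (hKm : 0 < Km)
    (ap am : (Fin d → ℝ) → ℝ) (hap : Continuous ap) (ham : Continuous am)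
    (horder : ∀ y : Fin d → ℝ, ap y < α ∧ α < am y)
    (hUbdd : ∀ (x : ℝ) (y : Fin d → ℝ), -Kp ≤ U (x, y) ∧ U (x, y) ≤ Km)
    (hUplus : ∀ (x : ℝ) (y : Fin d → ℝ), x ≤ ap y → U (x, y) = -Kp)
    (hUminus : ∀ (x : ℝ) (y : Fin d → ℝ), am y ≤ x → U (x, y) = Km)
    (hPDE : ∀ (x : ℝ) (y : Fin d → ℝ), ap y < x → x < am y →
      genHat b σ η ζ ρ U (x, y) + pdx b (x, y) * U (x, y) + pdx c (x, y) = 0)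
    (hSminus : ∀ (x : ℝ) (y : Fin d → ℝ), am y ≤ x →
      0 ≤ pdx c (x, y) + Km * pdx b (x, y))
    (hSplus : ∀ (x : ℝ) (y : Fin d → ℝ), x ≤ ap y →
      pdx c (x, y) - Kp * pdx b (x, y) ≤ 0) :
    ∀ (x : ℝ) (y : Fin d → ℝ),
      (-Kp ≤ pdx V (x, y) ∧ pdx V (x, y) ≤ Km)
      ∧ 0 ≤ gen b σ η ζ ρ V (x, y) + c (x, y) - lam y
      ∧ min (min (gen b σ η ζ ρ V (x, y) + c (x, y) - lam y)
          (Km - pdx V (x, y))) (pdx V (x, y) + Kp) = 0 :=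
  statement1_general α b σ c (fun _ => by fun_prop) (fun _ => by fun_prop) (fun _ => by fun_prop)
    η ζ ρ U hU V hV lam hlam Kp Km ap am hap.lowerSemicontinuous ham.upperSemicontinuous
    (fun y => ⟨(horder y).1.le, (horder y).2.le⟩) hUbdd hUplus hUminus hPDE hSminus hSplus
end

section
/- For every z₀ ∈ ℝ there exists x ∈ ℝ such that q(x, z₀) ≠ 0; that is, no section x ↦ q(x, z₀) vanishes identically (the system admits no trap curve). -/
/-- Partial derivative in the first variable. -/
noncomputable def pd1 (f : ℝ × ℝ → ℝ) (p : ℝ × ℝ) : ℝ := deriv (fun x => f (x, p.2)) p.1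

/-- Partial derivative in the second variable. -/
noncomputable def pd2 (f : ℝ × ℝ → ℝ) (p : ℝ × ℝ) : ℝ := deriv (fun y => f (p.1, y)) p.2

/-- `E(x,z) = exp((γ/σ)(z+x)) / (1 + exp((γ/σ)(z+x)))`. -/
noncomputable def Efun (σ γ : ℝ) (x z : ℝ) : ℝ :=
  Real.exp ((γ / σ) * (z + x)) / (1 + Real.exp ((γ / σ) * (z + x)))

/-- `m(y) = m₂ + (m₁ - m₂) y`. -/
noncomputable def mfun (m₁ m₂ : ℝ) (y : ℝ) : ℝ := m₂ + (m₁ - m₂) * y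

/-- `μ(x,z) = m(E(x,z)) - δ x`. -/
noncomputable def mufun (σ γ δ m₁ m₂ : ℝ) (x z : ℝ) : ℝ :=
  mfun m₁ m₂ (Efun σ γ x z) - δ * x

/-- The drift `q(x,z)` of the finite-variation coordinate `Z`. -/
noncomputable def qfun (σ γ δ lam₁ lam₂ m₁ m₂ : ℝ) (x z : ℝ) : ℝ :=
  σ * γ * (Efun σ γ x z - 1 / 2)
    + (σ / γ) * (1 + Real.exp (-(γ / σ) * (z + x)))
      * (lam₂ - lam₁ * Real.exp ((γ / σ) * (z + x)))
    - mfun m₁ m₂ (Efun σ γ x z) + δ * x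

/-- `z(x,y) = (σ/γ) log(y/(1-y)) - x`. -/
noncomputable def zfun (σ γ : ℝ) (x y : ℝ) : ℝ := (σ / γ) * Real.log (y / (1 - y)) - x

/-!
In the coordinate `u = (γ / σ) * (z + x)` each section of `q` is a linear combination of `exp u`,
`exp (-u)`, `u`, `sigmoid u` and `1`. These functions are linearly independent: as `u → ∞` the
first dominates the others, the reflection `u ↦ -u` exchanges the two exponentials, `u` dominates
what is left, and `sigmoid` vanishes at `-∞`. So a section can vanish identically only if all five
coefficients are zero, and the coefficient of `exp u` is `-(σ / γ) * λ₁`.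
-/

open Real Filter Asymptotics Topology

theorem eq_zero_of_const_mul_add_eventuallyEq_zero {α 𝕜 : Type*} [NormedField 𝕜] {l : Filter α}
    {f g : α → 𝕜} {c : 𝕜} (hf : ∃ᶠ x in l, f x ≠ 0) (hg : g =o[l] f)
    (h : ∀ᶠ x in l, c * f x + g x = 0) : c = 0 := by
  by_contra hc
  have hneg : (fun x => -g x) =ᶠ[l] fun x => c * f x :=
    h.mono fun _ hx => (eq_neg_of_add_eq_zero_left hx).symm
  have hcf : (fun x => c * f x) =o[l] f := hg.neg_left.congr' hneg .rfl
  exact isLittleO_irrefl hf ((isLittleO_const_mul_left_iff hc).mp hcf)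

theorem sigmoid_isBigO_one (l : Filter ℝ) : sigmoid =O[l] fun _ => (1 : ℝ) :=
  .of_bound' <| .of_forall fun u => by
    simpa [abs_of_nonneg (sigmoid_nonneg u)] using sigmoid_le_one u

theorem exp_neg_id_sigmoid_one_isLittleO_exp (b c d e : ℝ) :
    (fun u => b * exp (-u) + c * u + d * sigmoid u + e) =o[atTop] exp := by
  have hone : (fun _ : ℝ => (1 : ℝ)) =o[atTop] exp := isLittleO_one_exp_comp.mpr tendsto_id
  have hneg : (fun u => exp (-u)) =o[atTop] exp :=
    ((isLittleO_one_iff ℝ).mpr tendsto_exp_neg_atTop_nhds_zero).trans hone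
  have hid : (fun u : ℝ => u) =o[atTop] exp := by
    simpa only [pow_one] using isLittleO_pow_exp_atTop (n := 1)
  have hsig : sigmoid =o[atTop] exp := (sigmoid_isBigO_one _).trans_isLittleO hone
  have hconst : (fun _ : ℝ => e) =o[atTop] exp := (isBigO_const_one ℝ e _).trans_isLittleO hone
  exact (((hneg.const_mul_left b).add (hid.const_mul_left c)).add
    (hsig.const_mul_left d)).add hconst

theorem exp_coeff_eq_zero {a b c d e : ℝ}
    (h : ∀ u, a * exp u + b * exp (-u) + c * u + d * sigmoid u + e = 0) : a = 0 :=
  eq_zero_of_const_mul_add_eventuallyEq_zero (.of_forall exp_ne_zero)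
    (exp_neg_id_sigmoid_one_isLittleO_exp b c d e) (.of_forall fun u => by linear_combination h u)

theorem exp_neg_coeff_eq_zero {a b c d e : ℝ}
    (h : ∀ u, a * exp u + b * exp (-u) + c * u + d * sigmoid u + e = 0) : b = 0 := by
  refine exp_coeff_eq_zero (a := b) (b := a) (c := -c) (d := -d) (e := d + e) fun u => ?_
  have hu := h (-u)
  rw [neg_neg, sigmoid_neg] at hu
  linear_combination hu

theorem id_coeff_eq_zero {c d e : ℝ} (h : ∀ u, c * u + d * sigmoid u + e = 0) : c = 0 := by
  have hone : (fun _ : ℝ => (1 : ℝ)) =o[atTop] id := isLittleO_const_id_atTop 1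
  have hsig : (fun u => d * sigmoid u) =o[atTop] id :=
    ((sigmoid_isBigO_one _).trans_isLittleO hone).const_mul_left d
  exact eq_zero_of_const_mul_add_eventuallyEq_zero (eventually_ne_atTop 0).frequently
    (hsig.add (isLittleO_const_id_atTop e)) (.of_forall fun u => by simpa [add_assoc] using h u)

theorem const_coeff_eq_zero {d e : ℝ} (h : ∀ u, d * sigmoid u + e = 0) : e = 0 := by
  have hlim : Tendsto (fun u => d * sigmoid u + e) atBot (𝓝 (d * 0 + e)) :=
    (tendsto_sigmoid_atBot.const_mul d).add_const e
  simp only [h, mul_zero, zero_add, tendsto_const_nhds_iff] at hlim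
  exact hlim.symm

theorem linearIndependent_exp_exp_neg_id_sigmoid_one :
    LinearIndependent ℝ ![exp, fun u => exp (-u), id, sigmoid, 1] := by
  refine Fintype.linearIndependent_iff.mpr fun k hk => ?_
  have h (u : ℝ) : k 0 * exp u + k 1 * exp (-u) + k 2 * u + k 3 * sigmoid u + k 4 = 0 := by
    simpa [Fin.sum_univ_five] using congrFun hk u
  have h0 : k 0 = 0 := exp_coeff_eq_zero h
  have h1 : k 1 = 0 := exp_neg_coeff_eq_zero h
  simp only [h0, h1, zero_mul, zero_add] at h
  have h2 : k 2 = 0 := id_coeff_eq_zero h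
  simp only [h2, zero_mul, zero_add] at h
  have h4 : k 4 = 0 := const_coeff_eq_zero h
  have h3 : k 3 = 0 := by simpa [h4, (sigmoid_pos 0).ne'] using h 0
  intro i
  fin_cases i <;> assumption

theorem Efun_eq_sigmoid (σ γ x z : ℝ) : Efun σ γ x z = sigmoid (γ / σ * (z + x)) := by
  rw [Efun, sigmoid_def, exp_neg]
  field_simp
  ring

theorem qfun_eq_combination {σ γ : ℝ} (hσ : σ ≠ 0) (hγ : γ ≠ 0) (δ lam₁ lam₂ m₁ m₂ u z : ℝ) :
    qfun σ γ δ lam₁ lam₂ m₁ m₂ (σ / γ * u - z) z =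
      -(σ / γ * lam₁) * exp u + σ / γ * lam₂ * exp (-u) + δ * (σ / γ) * u
        + (σ * γ - (m₁ - m₂)) * sigmoid u
        + (σ / γ * (lam₂ - lam₁) - σ * γ / 2 - m₂ - δ * z) := by
  have hu : γ / σ * (z + (σ / γ * u - z)) = u := by field_simp; ring
  have hexp : exp (-u) * exp u = 1 := by rw [← exp_add, neg_add_cancel, exp_zero]
  rw [qfun, mfun, Efun_eq_sigmoid, neg_mul, hu]
  linear_combination -(σ / γ * lam₁) * hexp

theorem statement7_general {σ γ : ℝ} (hσ : σ ≠ 0) (hγ : γ ≠ 0) (δ lam₁ lam₂ m₁ m₂ z₀ : ℝ) :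
    (∀ x, qfun σ γ δ lam₁ lam₂ m₁ m₂ x z₀ = 0) ↔
      lam₁ = 0 ∧ lam₂ = 0 ∧ δ = 0 ∧ m₁ = σ * γ / 2 ∧ m₂ = -(σ * γ / 2) := by
  constructor
  · intro h
    have hcoeff := Fintype.linearIndependent_iff.mp linearIndependent_exp_exp_neg_id_sigmoid_one
      ![-(σ / γ * lam₁), σ / γ * lam₂, δ * (σ / γ), σ * γ - (m₁ - m₂),
        σ / γ * (lam₂ - lam₁) - σ * γ / 2 - m₂ - δ * z₀] <| funext fun u => by
          simpa [Fin.sum_univ_five] using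
            (qfun_eq_combination hσ hγ δ lam₁ lam₂ m₁ m₂ u z₀).symm.trans (h _)
    have hlam₁ : lam₁ = 0 := by simpa [hσ, hγ] using hcoeff 0
    have hlam₂ : lam₂ = 0 := by simpa [hσ, hγ] using hcoeff 1
    have hδ : δ = 0 := by simpa [hσ, hγ] using hcoeff 2
    have hsig : σ * γ - (m₁ - m₂) = 0 := hcoeff 3
    have hconst : -(σ * γ / 2) - m₂ = 0 := by simpa [hlam₁, hlam₂, hδ] using hcoeff 4
    exact ⟨hlam₁, hlam₂, hδ, by linarith, by linarith⟩
  · rintro ⟨rfl, rfl, rfl, rfl, rfl⟩ x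
    simp only [qfun, mfun]
    ring

theorem statement7 (σ γ δ lam₁ lam₂ m₁ m₂ : ℝ)
    (hσ : 0 < σ) (hγ : 0 < γ) (hδ : 0 < δ) (hlam₁ : 0 < lam₁) (hlam₂ : 0 < lam₂)
    (hm : m₂ < m₁) :
    ∀ z₀ : ℝ, ∃ x : ℝ, qfun σ γ δ lam₁ lam₂ m₁ m₂ x z₀ ≠ 0 := fun z₀ =>
  not_forall.mp fun h =>
    hlam₁.ne' ((statement7_general hσ.ne' hγ.ne' δ lam₁ lam₂ m₁ m₂ z₀).mp h).1
end

section
/- Let σ > 0, γ > 0, δ > 0, λ₁ > 0, λ₂ > 0, m₁ > m₂, α ∈ ℝ; set m(y) := m₂ + (m₁ − m₂)y and b(x,y) := m(y) − δx. Let c : ℝ → ℝ be continuously differentiable and Û : ℝ² → ℝ be twice continuously differentiable; define z(x,y) := (σ/γ)·log(y/(1−y)) − x, U(x,y) := Û(x, z(x,y)), V(x,y) := ∫_α^x U(x′,y) dx′, and λ(y) := c(α) + U(α,y)·b(α,y) + (σ²/2)·U_x(α,y) + σγ·y(1−y)·U_y(α,y). Then V is twice continuously differentiable on ℝ × (0,1)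 and for every (x,y) ∈ ℝ × (0,1): (L V)(x,y) + c(x) − λ(y) = ∫_α^x ( (L U)(x′,y) − δ·U(x′,y) + c′(x′) ) dx′, where for a twice continuously differentiable g : ℝ × (0,1) → ℝ, (L g)(x,y) := (m(y) − δx)·g_x(x,y) + (σ²/2)·g_{xx}(x,y) + (λ₂ − (λ₁+λ₂)y)·g_y(x,y) + (γ²/2)·y²(1−y)²·g_{yy}(x,y) + σγ·y(1−y)·g_{xy}(x,y). -/
/-- The generator of the degenerate two-dimensional diffusion (inventory, belief):
`(L g)(x,y) = (m(y) − δx) g_x + (σ²/2) g_xx + (λ₂ − (λ₁+λ₂)y) g_y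
  + (γ²/2) y²(1−y)² g_yy + σγ y(1−y) g_xy`. -/
noncomputable def genL (σ γ δ lam₁ lam₂ m₁ m₂ : ℝ) (g : ℝ × ℝ → ℝ) (p : ℝ × ℝ) : ℝ :=
  (mfun m₁ m₂ p.2 - δ * p.1) * pd1 g p
    + (σ ^ 2 / 2) * pd1 (pd1 g) p
    + (lam₂ - (lam₁ + lam₂) * p.2) * pd2 g p
    + (γ ^ 2 / 2) * p.2 ^ 2 * (1 - p.2) ^ 2 * pd2 (pd2 g) p
    + σ * γ * p.2 * (1 - p.2) * pd2 (pd1 g) p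

/-!
Put `Φ = c + b U + (σ²/2) U_x + σγ y(1-y) U_y` with `b = m(y) - δx`, so that `λ(y) = Φ(α, y)`, and
let `M` be the part of `L` that differentiates in `y` only. Since `b_x = -δ` and mixed partial
derivatives commute, `L U - δ U + c' = Φ_x + M U`. Since `V_x = U`, also `L V + c = Φ + M V`. The
coefficients of `M` do not depend on `x`, so `M V = ∫_α^x M U` by differentiation under the integral
sign, and the identity is the fundamental theorem of calculus for `Φ`.
-/

open Set Filter Topology

section PartialDerivatives

variable {f g : ℝ × ℝ → ℝ} {p : ℝ × ℝ} {S : Set (ℝ × ℝ)} {m n : WithTop ℕ∞}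

lemma hasDerivAt_pd1 (hf : DifferentiableAt ℝ f p) :
    HasDerivAt (fun x => f (x, p.2)) (pd1 f p) p.1 :=
  DifferentiableAt.hasDerivAt (hf.comp p.1 (f := fun x => (x, p.2)) (by fun_prop))

lemma hasDerivAt_pd2 (hf : DifferentiableAt ℝ f p) :
    HasDerivAt (fun y => f (p.1, y)) (pd2 f p) p.2 :=
  DifferentiableAt.hasDerivAt (hf.comp p.2 (f := fun y => (p.1, y)) (by fun_prop))

lemma pd1_eq_fderiv (hf : DifferentiableAt ℝ f p) : pd1 f p = fderiv ℝ f p (1, 0) :=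
  (hf.hasFDerivAt.comp_hasDerivAt p.1 (f := fun x => (x, p.2))
    ((hasDerivAt_id _).prodMk (hasDerivAt_const _ _))).deriv

lemma pd2_eq_fderiv (hf : DifferentiableAt ℝ f p) : pd2 f p = fderiv ℝ f p (0, 1) :=
  (hf.hasFDerivAt.comp_hasDerivAt p.2 (f := fun y => (p.1, y))
    ((hasDerivAt_const _ _).prodMk (hasDerivAt_id _))).deriv

lemma pd1_congr_of_eventuallyEq (h : f =ᶠ[𝓝 p] g) : pd1 f p = pd1 g p :=
  EventuallyEq.deriv_eq <|
    (Continuous.prodMk_left p.2).continuousAt (x := p.1) |>.eventually h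

lemma pd2_congr_of_eventuallyEq (h : f =ᶠ[𝓝 p] g) : pd2 f p = pd2 g p :=
  EventuallyEq.deriv_eq <|
    (Continuous.prodMk_right p.1).continuousAt (x := p.2) |>.eventually h

lemma contDiffOn_pd1 (hS : IsOpen S) (hf : ContDiffOn ℝ n f S) (hmn : m + 1 ≤ n) :
    ContDiffOn ℝ m (pd1 f) S := by
  have hd : DifferentiableOn ℝ f S := (hf.of_le hmn).differentiableOn (by simp)
  exact ((hf.fderiv_of_isOpen hS hmn).clm_apply contDiffOn_const).congr fun p hp =>
    pd1_eq_fderiv (hd.differentiableAt (hS.mem_nhds hp))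

lemma contDiffOn_pd2 (hS : IsOpen S) (hf : ContDiffOn ℝ n f S) (hmn : m + 1 ≤ n) :
    ContDiffOn ℝ m (pd2 f) S := by
  have hd : DifferentiableOn ℝ f S := (hf.of_le hmn).differentiableOn (by simp)
  exact ((hf.fderiv_of_isOpen hS hmn).clm_apply contDiffOn_const).congr fun p hp =>
    pd2_eq_fderiv (hd.differentiableAt (hS.mem_nhds hp))

lemma pd2_pd1_eq_pd1_pd2 (hf : ContDiffAt ℝ 2 f p) : pd2 (pd1 f) p = pd1 (pd2 f) p := by
  have hd : ∀ᶠ q in 𝓝 p, DifferentiableAt ℝ f q :=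
    (hf.eventually (by simp)).mono fun q hq => hq.differentiableAt (by simp)
  have hd' : DifferentiableAt ℝ (fderiv ℝ f) p :=
    (hf.fderiv_right (m := 1) (by norm_num)).differentiableAt (by simp)
  calc pd2 (pd1 f) p
      = pd2 (fun q => fderiv ℝ f q (1, 0)) p :=
        pd2_congr_of_eventuallyEq (hd.mono fun _ => pd1_eq_fderiv)
    _ = fderiv ℝ (fderiv ℝ f) p (0, 1) (1, 0) := by
        rw [pd2_eq_fderiv (by fun_prop), fderiv_clm_apply hd' (by fun_prop)]
        simp
    _ = fderiv ℝ (fderiv ℝ f) p (1, 0) (0, 1) :=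
        (hf.isSymmSndFDerivAt (by simp)).eq _ _
    _ = pd1 (fun q => fderiv ℝ f q (0, 1)) p := by
        rw [pd1_eq_fderiv (by fun_prop), fderiv_clm_apply hd' (by fun_prop)]
        simp
    _ = pd1 (pd2 f) p :=
        (pd1_congr_of_eventuallyEq (hd.mono fun _ => pd2_eq_fderiv)).symm

end PartialDerivatives

section ParametricIntegral

variable {E : Type*} [NormedAddCommGroup E] [NormedSpace ℝ E]

lemma continuous_slice_of_continuousOn {X Y Z : Type*} [TopologicalSpace X] [TopologicalSpace Y]
    [TopologicalSpace Z] {s : Set Y} {f : X × Y → Z} (hf : ContinuousOn f (univ ×ˢ s)) {y : Y}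
    (hy : y ∈ s) : Continuous fun x => f (x, y) :=
  hf.comp_continuous (by fun_prop) fun _ => ⟨mem_univ _, hy⟩

lemma continuousOn_parametric_primitive {X : Type*} [TopologicalSpace X] {s : Set X}
    {f : ℝ × X → E} (hf : ContinuousOn f (univ ×ˢ s)) (a : ℝ) :
    ContinuousOn (fun p : ℝ × X => ∫ t in a..p.1, f (t, p.2)) (univ ×ˢ s) := by
  have hf_sub : Continuous fun q : s × ℝ => f (q.2, q.1) :=
    hf.comp_continuous (by fun_prop) fun q => ⟨mem_univ _, q.1.2⟩
  rw [continuousOn_iff_continuous_domRestrict]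
  exact (intervalIntegral.continuous_parametric_primitive_of_continuous (a₀ := a)
    (f := fun (x : s) t => f (t, x)) hf_sub).comp
    (f := fun p : univ ×ˢ s => ((⟨p.1.2, p.2.2⟩ : s), p.1.1)) (by fun_prop)

lemma hasDerivAt_intervalIntegral_of_continuousOn {I : Set ℝ} (hI : IsOpen I) {f f' : ℝ × ℝ → E}
    (hf : ContinuousOn f (univ ×ˢ I)) (hf' : ContinuousOn f' (univ ×ˢ I))
    (hderiv : ∀ t, ∀ y ∈ I, HasDerivAt (fun y => f (t, y)) (f' (t, y)) y)
    (a b : ℝ) {y : ℝ} (hy : y ∈ I) :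
    HasDerivAt (fun y => ∫ t in a..b, f (t, y)) (∫ t in a..b, f' (t, y)) y := by
  obtain ⟨ε, hε, hball⟩ := Metric.nhds_basis_closedBall.mem_iff.1 (hI.mem_nhds hy)
  obtain ⟨C, hC⟩ : ∃ C, ∀ q ∈ uIcc a b ×ˢ Metric.closedBall y ε, ‖f' q‖ ≤ C :=
    (isCompact_uIcc.prod (isCompact_closedBall y ε)).exists_bound_of_continuousOn
      (hf'.mono (prod_mono (subset_univ _) hball))
  refine (intervalIntegral.hasDerivAt_integral_of_dominated_loc_of_deriv_le
    (F := fun y t => f (t, y)) (F' := fun y t => f' (t, y)) (bound := fun _ => C)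
    (Metric.closedBall_mem_nhds y hε) ?_ ?_ ?_ ?_ intervalIntegrable_const ?_).2
  · filter_upwards [hI.mem_nhds hy] with z hz
    exact (continuous_slice_of_continuousOn hf hz).aestronglyMeasurable
  · exact (continuous_slice_of_continuousOn hf hy).intervalIntegrable _ _
  · exact (continuous_slice_of_continuousOn hf' hy).aestronglyMeasurable
  · exact .of_forall fun t ht z hz => hC (t, z) ⟨uIoc_subset_uIcc ht, hz⟩
  · exact .of_forall fun t _ z hz => hderiv t z (hball hz)

end ParametricIntegral

/-- The primitive of `f` in its first variable that vanishes on the line `x = a`. Applied to the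
transformed value function it gives the potential `V`. -/
noncomputable def primitiveFst (a : ℝ) (f : ℝ × ℝ → ℝ) (p : ℝ × ℝ) : ℝ :=
  ∫ t in a..p.1, f (t, p.2)

section PrimitiveFst

variable {I : Set ℝ} {f : ℝ × ℝ → ℝ} {p : ℝ × ℝ} (a : ℝ)

lemma hasDerivAt_primitiveFst_fst (hf : Continuous fun t => f (t, p.2)) :
    HasDerivAt (fun x => primitiveFst a f (x, p.2)) (f p) p.1 :=
  (hf.integral_hasStrictDerivAt a p.1).hasDerivAt

lemma hasDerivAt_primitiveFst_snd (hI : IsOpen I) (hf : ContDiffOn ℝ 1 f (univ ×ˢ I))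
    (hp : p.2 ∈ I) :
    HasDerivAt (fun y => primitiveFst a f (p.1, y)) (primitiveFst a (pd2 f) p) p.2 := by
  have hS : IsOpen ((univ : Set ℝ) ×ˢ I) := isOpen_univ.prod hI
  have hf' : ContinuousOn (pd2 f) (univ ×ˢ I) :=
    (contDiffOn_pd2 (m := 0) hS hf (by simp)).continuousOn
  have hd : DifferentiableOn ℝ f (univ ×ˢ I) := hf.differentiableOn (by simp)
  exact hasDerivAt_intervalIntegral_of_continuousOn hI hf.continuousOn hf'
    (fun t y hy => hasDerivAt_pd2 (p := (t, y))
      (hd.differentiableAt (hS.mem_nhds ⟨mem_univ t, hy⟩))) a p.1 hp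

lemma pd1_primitiveFst (hf : Continuous fun t => f (t, p.2)) : pd1 (primitiveFst a f) p = f p :=
  (hasDerivAt_primitiveFst_fst a hf).deriv

lemma pd2_primitiveFst (hI : IsOpen I) (hf : ContDiffOn ℝ 1 f (univ ×ˢ I)) (hp : p.2 ∈ I) :
    pd2 (primitiveFst a f) p = primitiveFst a (pd2 f) p :=
  (hasDerivAt_primitiveFst_snd a hI hf hp).deriv

lemma primitiveFst_pd1 (hI : IsOpen I) (hf : ContDiffOn ℝ 1 f (univ ×ˢ I)) (hp : p.2 ∈ I) :
    primitiveFst a (pd1 f) p = f p - f (a, p.2) := by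
  have hS : IsOpen ((univ : Set ℝ) ×ˢ I) := isOpen_univ.prod hI
  have hf' : ContinuousOn (pd1 f) (univ ×ˢ I) :=
    (contDiffOn_pd1 (m := 0) hS hf (by simp)).continuousOn
  have hd : DifferentiableOn ℝ f (univ ×ˢ I) := hf.differentiableOn (by simp)
  exact intervalIntegral.integral_eq_sub_of_hasDerivAt (f := fun t => f (t, p.2))
    (fun t _ => hasDerivAt_pd1 (p := (t, p.2))
      (hd.differentiableAt (hS.mem_nhds ⟨mem_univ t, hp⟩)))
    ((continuous_slice_of_continuousOn hf' hp).intervalIntegrable _ _)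

lemma hasFDerivAt_primitiveFst (hI : IsOpen I) (hf : ContDiffOn ℝ 1 f (univ ×ˢ I))
    (hp : p.2 ∈ I) :
    HasFDerivAt (primitiveFst a f)
      (f p • ContinuousLinearMap.fst ℝ ℝ ℝ
        + primitiveFst a (pd2 f) p • ContinuousLinearMap.snd ℝ ℝ ℝ) p := by
  have hS : IsOpen ((univ : Set ℝ) ×ˢ I) := isOpen_univ.prod hI
  have hSp : univ ×ˢ I ∈ 𝓝 p := hS.mem_nhds ⟨mem_univ _, hp⟩
  have hf' : ContinuousOn (primitiveFst a (pd2 f)) (univ ×ˢ I) :=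
    continuousOn_parametric_primitive
      (contDiffOn_pd2 (m := 0) hS hf (by simp)).continuousOn a
  have hstrict := hasStrictFDerivAt_uncurry_coprod (𝕜 := ℝ) (u := p)
    (f := fun x y => primitiveFst a f (x, y))
    (f₁ := fun x y => .toSpanSingleton ℝ (f (x, y)))
    (f₂ := fun x y => .toSpanSingleton ℝ (primitiveFst a (pd2 f) (x, y)))
    (by filter_upwards [hSp] with q hq
        exact (hasDerivAt_primitiveFst_fst a
          (continuous_slice_of_continuousOn hf.continuousOn hq.2)).hasFDerivAt)
    (by filter_upwards [hSp] with q hq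
        exact (hasDerivAt_primitiveFst_snd a hI hf hq.2).hasFDerivAt)
    ((ContinuousLinearMap.toSpanSingletonCLE (𝕜 := ℝ)).continuous.continuousAt.comp
      (hf.continuousOn.continuousAt hSp))
    ((ContinuousLinearMap.toSpanSingletonCLE (𝕜 := ℝ)).continuous.continuousAt.comp
      (hf'.continuousAt hSp))
  refine hstrict.hasFDerivAt.congr_fderiv ?_
  ext <;> simp [Function.HasUncurry.uncurry]

lemma contDiffOn_primitiveFst (hI : IsOpen I) (n : ℕ) (hf : ContDiffOn ℝ n f (univ ×ˢ I)) :
    ContDiffOn ℝ n (primitiveFst a f) (univ ×ˢ I) := by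
  have hS : IsOpen ((univ : Set ℝ) ×ˢ I) := isOpen_univ.prod hI
  induction n generalizing f with
  | zero => exact contDiffOn_zero.2 (continuousOn_parametric_primitive hf.continuousOn a)
  | succ n ih =>
    have hderiv := fun q (hq : q ∈ univ ×ˢ I) =>
      hasFDerivAt_primitiveFst (p := q) a hI (hf.of_le (by simp)) hq.2
    have hpd2 : ContDiffOn ℝ n (primitiveFst a (pd2 f)) (univ ×ˢ I) :=
      ih (contDiffOn_pd2 hS hf (by simp))
    push_cast
    refine (contDiffOn_succ_iff_fderiv_of_isOpen hS).2
      ⟨fun q hq => (hderiv q hq).differentiableAt.differentiableWithinAt, by simp, ?_⟩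
    exact (((hf.of_le (by simp)).smul contDiffOn_const).add
      (hpd2.smul contDiffOn_const)).congr fun q hq => (hderiv q hq).fderiv

end PrimitiveFst

/-- The generator of the belief component alone: the part of `genL` that differentiates in the
second variable only. Its coefficients do not involve `x`, so it commutes with `primitiveFst`. -/
noncomputable def beliefGen (γ lam₁ lam₂ : ℝ) (g : ℝ × ℝ → ℝ) (p : ℝ × ℝ) : ℝ :=
  (lam₂ - (lam₁ + lam₂) * p.2) * pd2 g p
    + (γ ^ 2 / 2) * p.2 ^ 2 * (1 - p.2) ^ 2 * pd2 (pd2 g) p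

/-- The flux in the inventory direction, running cost included: the quantity whose `x`-derivative
is the part of `genL g - δ g + c'` not captured by `beliefGen`. Its value at `x = α` is the
ergodic term `λ`. -/
noncomputable def inventoryFlux (σ γ δ m₁ m₂ : ℝ) (c : ℝ → ℝ) (g : ℝ × ℝ → ℝ) (p : ℝ × ℝ) : ℝ :=
  c p.1 + g p * (mfun m₁ m₂ p.2 - δ * p.1)
    + (σ ^ 2 / 2) * pd1 g p + σ * γ * p.2 * (1 - p.2) * pd2 g p

section Generator

variable {σ γ δ lam₁ lam₂ m₁ m₂ : ℝ} {I : Set ℝ} {c : ℝ → ℝ} {U : ℝ × ℝ → ℝ} {p : ℝ × ℝ}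

lemma continuousOn_beliefGen {S : Set (ℝ × ℝ)} (hS : IsOpen S) (hU : ContDiffOn ℝ 2 U S) :
    ContinuousOn (beliefGen γ lam₁ lam₂ U) S := by
  have hU2 : ContDiffOn ℝ 1 (pd2 U) S := contDiffOn_pd2 hS hU (by norm_num)
  have hU22 : ContDiffOn ℝ 0 (pd2 (pd2 U)) S := contDiffOn_pd2 hS hU2 (by norm_num)
  have hc2 := hU2.continuousOn
  have hc22 := hU22.continuousOn
  unfold beliefGen
  fun_prop

lemma contDiffOn_inventoryFlux {S : Set (ℝ × ℝ)} (hS : IsOpen S) (hc : ContDiff ℝ 1 c)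
    (hU : ContDiffOn ℝ 2 U S) : ContDiffOn ℝ 1 (inventoryFlux σ γ δ m₁ m₂ c U) S := by
  have hU0 : ContDiffOn ℝ 1 U S := hU.of_le (by norm_num)
  have hU1 : ContDiffOn ℝ 1 (pd1 U) S := contDiffOn_pd1 hS hU (by norm_num)
  have hU2 : ContDiffOn ℝ 1 (pd2 U) S := contDiffOn_pd2 hS hU (by norm_num)
  unfold inventoryFlux mfun
  fun_prop

lemma beliefGen_primitiveFst (a : ℝ) (hI : IsOpen I) (hU : ContDiffOn ℝ 2 U (univ ×ˢ I))
    (hp : p.2 ∈ I) :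
    beliefGen γ lam₁ lam₂ (primitiveFst a U) p
      = primitiveFst a (beliefGen γ lam₁ lam₂ U) p := by
  have hS : IsOpen ((univ : Set ℝ) ×ˢ I) := isOpen_univ.prod hI
  have hU1 : ContDiffOn ℝ 1 U (univ ×ˢ I) := hU.of_le (by norm_num)
  have hU2 : ContDiffOn ℝ 1 (pd2 U) (univ ×ˢ I) := contDiffOn_pd2 hS hU (by norm_num)
  have hU22 : ContDiffOn ℝ 0 (pd2 (pd2 U)) (univ ×ˢ I) := contDiffOn_pd2 hS hU2 (by norm_num)
  have hpd2 : pd2 (primitiveFst a U) =ᶠ[𝓝 p] primitiveFst a (pd2 U) := by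
    filter_upwards [hS.mem_nhds ⟨mem_univ _, hp⟩] with q hq using pd2_primitiveFst a hI hU1 hq.2
  have hpd22 : pd2 (pd2 (primitiveFst a U)) p = primitiveFst a (pd2 (pd2 U)) p :=
    (pd2_congr_of_eventuallyEq hpd2).trans (pd2_primitiveFst a hI hU2 hp)
  have hc2 := continuous_slice_of_continuousOn hU2.continuousOn hp
  have hc22 := continuous_slice_of_continuousOn hU22.continuousOn hp
  simp only [beliefGen, hpd2.eq_of_nhds, hpd22]
  simp only [primitiveFst, beliefGen]
  rw [intervalIntegral.integral_add ((hc2.const_mul _).intervalIntegrable _ _)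
      ((hc22.const_mul _).intervalIntegrable _ _),
    intervalIntegral.integral_const_mul, intervalIntegral.integral_const_mul]

lemma genL_primitiveFst_add (a : ℝ) (hI : IsOpen I) (hU : ContinuousOn U (univ ×ˢ I))
    (hp : p.2 ∈ I) :
    genL σ γ δ lam₁ lam₂ m₁ m₂ (primitiveFst a U) p + c p.1
      = inventoryFlux σ γ δ m₁ m₂ c U p + beliefGen γ lam₁ lam₂ (primitiveFst a U) p := by
  have hpd1 : pd1 (primitiveFst a U) =ᶠ[𝓝 p] U := by
    filter_upwards [(isOpen_univ.prod hI).mem_nhds ⟨mem_univ _, hp⟩] with q hq using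
      pd1_primitiveFst a (continuous_slice_of_continuousOn hU hq.2)
  simp only [genL, inventoryFlux, beliefGen, hpd1.eq_of_nhds, pd1_congr_of_eventuallyEq hpd1,
    pd2_congr_of_eventuallyEq hpd1]
  ring

lemma pd1_inventoryFlux {S : Set (ℝ × ℝ)} (hS : IsOpen S) (hc : DifferentiableAt ℝ c p.1)
    (hU : ContDiffOn ℝ 2 U S) (hp : p ∈ S) :
    pd1 (inventoryFlux σ γ δ m₁ m₂ c U) p
      = deriv c p.1 + (pd1 U p * (mfun m₁ m₂ p.2 - δ * p.1) - δ * U p)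
        + (σ ^ 2 / 2) * pd1 (pd1 U) p + σ * γ * p.2 * (1 - p.2) * pd1 (pd2 U) p := by
  have hSp : S ∈ 𝓝 p := hS.mem_nhds hp
  have hU0 : HasDerivAt (fun x => U (x, p.2)) (pd1 U p) p.1 :=
    hasDerivAt_pd1 ((hU.contDiffAt hSp).differentiableAt (by simp))
  have hU1 : HasDerivAt (fun x => pd1 U (x, p.2)) (pd1 (pd1 U) p) p.1 :=
    hasDerivAt_pd1 (((contDiffOn_pd1 (m := 1) hS hU (by norm_num)).contDiffAt
      hSp).differentiableAt (by simp))
  have hU2 : HasDerivAt (fun x => pd2 U (x, p.2)) (pd1 (pd2 U) p) p.1 :=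
    hasDerivAt_pd1 (((contDiffOn_pd2 (m := 1) hS hU (by norm_num)).contDiffAt
      hSp).differentiableAt (by simp))
  have hdrift : HasDerivAt (fun x => mfun m₁ m₂ p.2 - δ * x) (-δ) p.1 := by
    simpa using ((hasDerivAt_id p.1).const_mul δ).const_sub (mfun m₁ m₂ p.2)
  have hflux := ((hc.hasDerivAt.add (hU0.mul hdrift)).add (hU1.const_mul (σ ^ 2 / 2))).add
    (hU2.const_mul (σ * γ * p.2 * (1 - p.2)))
  exact hflux.deriv.trans (by ring)

lemma genL_sub_add_deriv {S : Set (ℝ × ℝ)} (hS : IsOpen S) (hc : DifferentiableAt ℝ c p.1)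
    (hU : ContDiffOn ℝ 2 U S) (hp : p ∈ S) :
    genL σ γ δ lam₁ lam₂ m₁ m₂ U p - δ * U p + deriv c p.1
      = pd1 (inventoryFlux σ γ δ m₁ m₂ c U) p + beliefGen γ lam₁ lam₂ U p := by
  rw [pd1_inventoryFlux hS hc hU hp, genL, beliefGen,
    pd2_pd1_eq_pd1_pd2 (hU.contDiffAt (hS.mem_nhds hp))]
  ring

lemma genL_primitiveFst_add_sub (a : ℝ) (hI : IsOpen I) (hc : ContDiff ℝ 1 c)
    (hU : ContDiffOn ℝ 2 U (univ ×ˢ I)) (hp : p.2 ∈ I) :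
    genL σ γ δ lam₁ lam₂ m₁ m₂ (primitiveFst a U) p + c p.1
        - inventoryFlux σ γ δ m₁ m₂ c U (a, p.2)
      = ∫ t in a..p.1, (genL σ γ δ lam₁ lam₂ m₁ m₂ U (t, p.2) - δ * U (t, p.2) + deriv c t) := by
  set Φ := inventoryFlux σ γ δ m₁ m₂ c U
  set B := beliefGen γ lam₁ lam₂ U
  have hS : IsOpen ((univ : Set ℝ) ×ˢ I) := isOpen_univ.prod hI
  have hΦ : ContDiffOn ℝ 1 Φ (univ ×ˢ I) := contDiffOn_inventoryFlux hS hc hU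
  have hΦ' : Continuous fun t => pd1 Φ (t, p.2) := continuous_slice_of_continuousOn
    (contDiffOn_pd1 (m := 0) hS hΦ (by simp)).continuousOn hp
  have hB : Continuous fun t => B (t, p.2) :=
    continuous_slice_of_continuousOn (continuousOn_beliefGen hS hU) hp
  calc genL σ γ δ lam₁ lam₂ m₁ m₂ (primitiveFst a U) p + c p.1 - Φ (a, p.2)
      = (Φ p - Φ (a, p.2)) + primitiveFst a B p := by
        rw [genL_primitiveFst_add a hI hU.continuousOn hp, beliefGen_primitiveFst a hI hU hp]
        ring
    _ = primitiveFst a (pd1 Φ) p + primitiveFst a B p := by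
        rw [primitiveFst_pd1 a hI hΦ hp]
    _ = ∫ t in a..p.1, (pd1 Φ (t, p.2) + B (t, p.2)) :=
        (intervalIntegral.integral_add (hΦ'.intervalIntegrable _ _)
          (hB.intervalIntegrable _ _)).symm
    _ = ∫ t in a..p.1, (genL σ γ δ lam₁ lam₂ m₁ m₂ U (t, p.2) - δ * U (t, p.2) + deriv c t) :=
        intervalIntegral.integral_congr fun t _ =>
          (genL_sub_add_deriv (p := (t, p.2)) hS (hc.differentiable (by simp) t) hU
            ⟨mem_univ t, hp⟩).symm

end Generator

lemma contDiffOn_comp_zfun (σ γ : ℝ) {n : WithTop ℕ∞} {Uh : ℝ × ℝ → ℝ} (hUh : ContDiff ℝ n Uh) :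
    ContDiffOn ℝ n (fun p : ℝ × ℝ => Uh (p.1, zfun σ γ p.1 p.2)) (univ ×ˢ Ioo 0 1) := by
  have hodds : ContDiffOn ℝ n (fun p : ℝ × ℝ => p.2 / (1 - p.2)) (univ ×ˢ Ioo 0 1) :=
    contDiffOn_snd.div (by fun_prop) fun p hp => (sub_pos.2 hp.2.2).ne'
  have hlog : ContDiffOn ℝ n (fun p : ℝ × ℝ => Real.log (p.2 / (1 - p.2))) (univ ×ˢ Ioo 0 1) :=
    hodds.log fun p hp => (div_pos hp.2.1 (sub_pos.2 hp.2.2)).ne'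
  refine hUh.comp_contDiffOn (contDiffOn_fst.prodMk ?_)
  unfold zfun
  fun_prop

theorem statement13_general (σ γ δ lam₁ lam₂ m₁ m₂ α : ℝ) (I : Set ℝ) (hI : IsOpen I)
    (c : ℝ → ℝ) (hc : ContDiff ℝ 1 c)
    (U : ℝ × ℝ → ℝ) (hU : ContDiffOn ℝ 2 U (univ ×ˢ I))
    (V : ℝ × ℝ → ℝ) (hVdef : ∀ x y : ℝ, V (x, y) = ∫ x' in α..x, U (x', y))
    (lam : ℝ → ℝ)
    (hlam : ∀ y : ℝ, lam y = c α + U (α, y) * (mfun m₁ m₂ y - δ * α)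
        + (σ ^ 2 / 2) * pd1 U (α, y) + σ * γ * y * (1 - y) * pd2 U (α, y)) :
    ContDiffOn ℝ 2 V (univ ×ˢ I)
      ∧ ∀ x : ℝ, ∀ y ∈ I,
        genL σ γ δ lam₁ lam₂ m₁ m₂ V (x, y) + c x - lam y
          = ∫ x' in α..x,
              (genL σ γ δ lam₁ lam₂ m₁ m₂ U (x', y) - δ * U (x', y) + deriv c x') := by
  obtain rfl : V = primitiveFst α U := funext fun p => hVdef p.1 p.2
  refine ⟨contDiffOn_primitiveFst α hI 2 hU, fun x y hy => ?_⟩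
  rw [hlam y]
  exact genL_primitiveFst_add_sub α hI hc hU (p := (x, y)) hy

theorem statement13 (σ γ δ lam₁ lam₂ m₁ m₂ α : ℝ)
    (hσ : 0 < σ) (hγ : 0 < γ) (hδ : 0 < δ) (hlam₁ : 0 < lam₁) (hlam₂ : 0 < lam₂)
    (hm : m₂ < m₁)
    (c : ℝ → ℝ) (hc : ContDiff ℝ 1 c)
    (Uh : ℝ × ℝ → ℝ) (hUh : ContDiff ℝ 2 Uh)
    (U : ℝ × ℝ → ℝ) (hUdef : ∀ x y : ℝ, U (x, y) = Uh (x, zfun σ γ x y))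
    (V : ℝ × ℝ → ℝ) (hVdef : ∀ x y : ℝ, V (x, y) = ∫ x' in α..x, U (x', y))
    (lam : ℝ → ℝ)
    (hlam : ∀ y : ℝ, lam y = c α + U (α, y) * (mfun m₁ m₂ y - δ * α)
        + (σ ^ 2 / 2) * pd1 U (α, y) + σ * γ * y * (1 - y) * pd2 U (α, y)) :
    ContDiffOn ℝ 2 V (Set.univ ×ˢ Set.Ioo (0 : ℝ) 1)
      ∧ ∀ x : ℝ, ∀ y ∈ Set.Ioo (0 : ℝ) 1,
        genL σ γ δ lam₁ lam₂ m₁ m₂ V (x, y) + c x - lam y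
          = ∫ x' in α..x,
              (genL σ γ δ lam₁ lam₂ m₁ m₂ U (x', y) - δ * U (x', y) + deriv c x') :=
  statement13_general σ γ δ lam₁ lam₂ m₁ m₂ α _ isOpen_Ioo c hc U
    ((contDiffOn_comp_zfun σ γ hUh).congr fun p _ => hUdef p.1 p.2) V hVdef lam hlam
end
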